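/- arXiv:1309.0416 — 4 statements merged into one kernel-verified Lean document; each statement's English description precedes it below -/
import Mathlib

section
/- Distinguishing homomorphisms do not compose in general: there exist finite graphs G, H, K and homomorphisms f : G → H and g : H → K such that f and g are both distinguishing homomorphisms but the composition g ∘ f : G → K is not a distinguishing homomorphism. -/
/-!
Take `P₃ → P₄ → K₂`, where `Pₙ` is the path on `n` vertices, the first map is the inclusion and
the second one the proper 2-colouring. The inclusion is injective, hence distinguishing.
An automorphism of a path maps ends to ends and is the identity once it fixes one of them. In `P₄`
the ends have different colours, so the colouring of `P₄` is distinguishing, whereas the reversal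
of `P₃` preserves colours. The same works with any odd `n > 1` in place of `3`.
-/

open SimpleGraph

/-- An automorphism `α` of `G` is *preserving relative to* a homomorphism `f : G →g H`
if `f (α v) = f v` for every vertex `v`.  The homomorphism `f` is *distinguishing* if the
only preserving automorphism is the identity. -/
def Distinguishing {V W : Type*} {G : SimpleGraph V} {H : SimpleGraph W} (f : G →g H) : Prop :=
  ∀ α : G ≃g G, (∀ v, f (α v) = f v) → ∀ v, α v = v

theorem Distinguishing.of_injective {V W : Type*} {G : SimpleGraph V} {H : SimpleGraph W}
    {f : G →g H} (hf : Function.Injective f) : Distinguishing f :=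
  fun _ hα v ↦ hf (hα v)

/-- The inclusion of a path as an initial segment of a longer one. -/
def pathGraphCastLE {m n : ℕ} (h : m ≤ n) : pathGraph m ↪g pathGraph n where
  toEmbedding := Fin.castLEEmb h
  map_rel_iff' := by simp [pathGraph_adj]

/-- The automorphism of a path that exchanges its two ends. -/
def pathGraphRev (n : ℕ) : pathGraph n ≃g pathGraph n where
  toEquiv := Fin.revPerm
  map_rel_iff' {u v} := by
    simp only [pathGraph_adj, Fin.revPerm_apply, Fin.val_rev]
    lia

section Automorphisms

variable {n : ℕ} [NeZero n]

theorem pathGraph_iso_apply_zero (α : pathGraph n ≃g pathGraph n) :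
    (α 0).val = 0 ∨ (α 0).val + 1 = n := by
  -- Otherwise `α 0` has two neighbours, while `1` is the only neighbour of `0`.
  by_contra! ⟨h_first, h_last⟩
  let pred : Fin n := ⟨(α 0).val - 1, by lia⟩
  let succ : Fin n := ⟨(α 0).val + 1, by lia⟩
  have val_symm_eq_one {w : Fin n} (hw : (pathGraph n).Adj (α 0) w) : (α.symm w).val = 1 := by
    have h_adj : (pathGraph n).Adj 0 (α.symm w) := by
      rwa [← α.map_adj_iff, α.apply_symm_apply]
    simpa [pathGraph_adj, eq_comm] using h_adj
  have h_pred : (α.symm pred).val = 1 :=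
    val_symm_eq_one (pathGraph_adj.2 (Or.inr (Nat.sub_add_cancel (Nat.pos_of_ne_zero h_first))))
  have h_succ : (α.symm succ).val = 1 := val_symm_eq_one (pathGraph_adj.2 (Or.inl rfl))
  have h_eq : pred = succ := α.symm.injective (Fin.ext (h_pred.trans h_succ.symm))
  have : (α 0).val - 1 = (α 0).val + 1 := congrArg Fin.val h_eq
  lia

theorem pathGraph_iso_apply_eq_self {α : pathGraph n ≃g pathGraph n} (h_zero : α 0 = 0)
    (v : Fin n) : α v = v := by
  obtain ⟨k, hk⟩ := v
  induction k using Nat.strong_induction_on with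
  | h k ih =>
    obtain _ | k := k
    · exact h_zero
    have h_adj : (pathGraph n).Adj ⟨k, by lia⟩ (α ⟨k + 1, hk⟩) := by
      rw [← ih k (by lia) (by lia), α.map_adj_iff, pathGraph_adj]
      exact Or.inl rfl
    obtain h_next | h_prev := pathGraph_adj.1 h_adj
    · exact Fin.ext h_next.symm
    -- `α` already fixes `k - 1`, so it would take the same value at `k - 1` and `k + 1`.
    · have h_fixed : α (α ⟨k + 1, hk⟩) = α ⟨k + 1, hk⟩ :=
        ih _ (Nat.lt_succ_of_lt (Nat.lt_of_succ_le h_prev.le)) (Fin.is_lt _)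
      exact α.injective h_fixed

end Automorphisms

theorem pathGraph_bicoloring_eq_iff {n : ℕ} {u v : Fin n} :
    pathGraph.bicoloring n u = pathGraph.bicoloring n v ↔ u.val % 2 = v.val % 2 := by
  change decide (u.val % 2 = 0) = decide (v.val % 2 = 0) ↔ _
  rw [decide_eq_decide]
  lia

theorem distinguishing_bicoloring_of_even {n : ℕ} (hn : Even n) :
    Distinguishing (pathGraph.bicoloring n) := by
  intro α hα v
  have : NeZero n := .of_pos v.pos
  have h_parity : (α 0).val % 2 = 0 := pathGraph_bicoloring_eq_iff.1 (hα 0)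
  have h_not_last : (α 0).val + 1 ≠ n := by grind
  have h_zero : α 0 = 0 := Fin.ext ((pathGraph_iso_apply_zero α).resolve_right h_not_last)
  exact pathGraph_iso_apply_eq_self h_zero v

theorem not_distinguishing_bicoloring_of_odd {n : ℕ} (hn : Odd n) (h_one : 1 < n) :
    ¬ Distinguishing (pathGraph.bicoloring n) := by
  intro h
  have h_color (v : Fin n) :
      pathGraph.bicoloring n (pathGraphRev n v) = pathGraph.bicoloring n v := by
    have h_parity : (n - (v.val + 1)) % 2 = v.val % 2 := by grind
    exact pathGraph_bicoloring_eq_iff.2 h_parity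
  have h_fixed := congrArg Fin.val (h (pathGraphRev n) h_color ⟨0, by lia⟩)
  have : n - 1 = 0 := h_fixed
  lia

theorem bicoloring_comp_pathGraphCastLE {m n : ℕ} (h : m ≤ n) :
    Hom.comp (pathGraph.bicoloring n) (pathGraphCastLE h).toHom = pathGraph.bicoloring m :=
  rfl

/-- Distinguishing homomorphisms do not compose in general: there are finite graphs
`G`, `H`, `K` and distinguishing homomorphisms `f : G →g H` and `g : H →g K` whose
composition `g.comp f` is not distinguishing. -/
theorem distinguishing_not_closed_under_comp :
    ∃ (VG VH VK : Type) (_ : Fintype VG) (_ : Fintype VH) (_ : Fintype VK)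
      (G : SimpleGraph VG) (H : SimpleGraph VH) (K : SimpleGraph VK)
      (f : G →g H) (g : H →g K),
      Distinguishing f ∧ Distinguishing g ∧ ¬ Distinguishing (g.comp f) := by
  refine ⟨Fin 3, Fin 4, Bool, inferInstance, inferInstance, inferInstance,
    pathGraph 3, pathGraph 4, ⊤, (pathGraphCastLE (Nat.le_succ 3)).toHom, pathGraph.bicoloring 4,
    .of_injective (pathGraphCastLE (Nat.le_succ 3)).injective,
    distinguishing_bicoloring_of_even (by decide), ?_⟩
  rw [bicoloring_comp_pathGraphCastLE]
  exact not_distinguishing_bicoloring_of_odd (by decide) (by decide)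
end

section
/- Every existentially closed countable graph is c.e.c.: if G is a countably infinite graph such that for all disjoint finite sets A and B of vertices of G there exists a vertex z ∉ A ∪ B adjacent to every vertex of A and to no vertex of B, then G satisfies the c.e.c. property. -/
open SimpleGraph

/-- The connected existentially closed (c.e.c.) adjacency property: for all non-adjacent
vertices `u` and `v` (possibly `u = v`) and every finite set `T` of vertices containing
neither `u` nor `v`, there is a walk from `u` to `v` of length at least `2` (a path when
`u ≠ v`, and a closed walk through `u` visiting some other vertex when `u = v`) whose
internal vertices are neither equal to nor adjacent to any vertex of `T`. -/
def CEC {V : Type*} (G : SimpleGraph V) : Prop :=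
  ∀ u v : V, ¬ G.Adj u v → ∀ T : Finset V, u ∉ T → v ∉ T →
    ∃ p : G.Walk u v, 2 ≤ p.length ∧ (u ≠ v → p.IsPath) ∧
      (u = v → ∃ w ∈ p.support, w ≠ u) ∧
      ∀ w ∈ p.support, w ≠ u → w ≠ v → w ∉ T ∧ ∀ t ∈ T, ¬ G.Adj w t

theorem isPath_cons_cons_nil_iff {V : Type*} {G : SimpleGraph V} {u z v : V}
    (huz : G.Adj u z) (hzv : G.Adj z v) :
    (Walk.cons huz (Walk.cons hzv Walk.nil)).IsPath ↔ u ≠ v := by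
  simp [Walk.isPath_def, huz.ne, hzv.ne]

theorem CEC.of_exists_common_neighbor {V : Type*} {G : SimpleGraph V}
    (h : ∀ u v : V, ¬ G.Adj u v → ∀ T : Finset V, u ∉ T → v ∉ T →
      ∃ z ∉ T, G.Adj z u ∧ G.Adj z v ∧ ∀ t ∈ T, ¬ G.Adj z t) :
    CEC G := by
  intro u v huv T hu hv
  obtain ⟨z, hzT, hzu, hzv, hz⟩ := h u v huv T hu hv
  refine ⟨.cons hzu.symm (.cons hzv .nil), le_rfl, (isPath_cons_cons_nil_iff hzu.symm hzv).mpr,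
    fun _ ↦ ⟨z, by simp, hzu.ne⟩, fun w hw hwu hwv ↦ ?_⟩
  obtain rfl : w = z := by simpa [hwu, hwv] using hw
  exact ⟨hzT, hz⟩

theorem ec_implies_cec_general {V : Type*} (G : SimpleGraph V)
    (hec : ∀ A B : Finset V, A.card ≤ 2 → Disjoint A B →
      ∃ z ∉ B, (∀ a ∈ A, G.Adj z a) ∧ ∀ b ∈ B, ¬ G.Adj z b) :
    CEC G := by
  classical
  refine CEC.of_exists_common_neighbor fun u v _ T hu hv ↦ ?_
  obtain ⟨z, hzT, hadj, hnadj⟩ := hec {u, v} T Finset.card_le_two (by simp [hu, hv])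
  exact ⟨z, hzT, hadj u (by simp), hadj v (by simp), hnadj⟩

/-- Every existentially closed countably infinite graph is c.e.c. -/
theorem ec_implies_cec {V : Type*} [Countable V] [Infinite V] (G : SimpleGraph V)
    (hec : ∀ A B : Finset V, Disjoint A B →
      ∃ z, z ∉ A ∧ z ∉ B ∧ (∀ a ∈ A, G.Adj z a) ∧ ∀ b ∈ B, ¬ G.Adj z b) :
    CEC G :=
  ec_implies_cec_general G fun A B _ hAB ↦ (hec A B hAB).imp fun _ hz ↦ hz.2
end

section
/- The infinite random bipartite graph is c.e.c.: let G be a bipartite graph with bipartition V(G) = V₁ ∪ V₂ (all edges of G go between V₁ and V₂) such that for each i ∈ {1,2} and all disjoint finite sets A, B ⊆ Vᵢ there exist infinitely many vertices z ∈ V₃₋ᵢ adjacent to every vertex of A and to no vertex of B. Then G satisfies the c.e.c. property. -/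
open SimpleGraph

/-!
Call a vertex remote from a finite set `T` if it lies outside the closed neighborhood of `T`. Two
vertices of the same part have a common neighbor remote from `T`: in the extension property take `B`
to be the trace of `T` on that part, the rest of `T` being harmless because the opposite part is
independent. If instead `u` and `v` lie in different parts, choose a neighbor `z` of `u` remote from
`T`, and then a common neighbor `w` of `z` and `v` remote from `T`; the walk `u, z, w, v` is a path
because `u` and `v` are not adjacent.
-/

section Walks

variable {V : Type*} {G : SimpleGraph V} {T : Finset V} {u v w z : V}

/-- `w` lies outside the closed neighborhood of `T`, as the c.e.c. property asks of the internal
vertices of its walks. -/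
def IsRemoteFrom (G : SimpleGraph V) (T : Finset V) (w : V) : Prop :=
  w ∉ T ∧ ∀ t ∈ T, ¬ G.Adj w t

/-- The walk that the c.e.c. property demands for the vertices `u`, `v` and the set `T`; the body
repeats the conclusion of `CEC` so that the two agree definitionally. -/
def HasRemoteWalk (G : SimpleGraph V) (T : Finset V) (u v : V) : Prop :=
  ∃ p : G.Walk u v, 2 ≤ p.length ∧ (u ≠ v → p.IsPath) ∧
    (u = v → ∃ w ∈ p.support, w ≠ u) ∧
    ∀ w ∈ p.support, w ≠ u → w ≠ v → IsRemoteFrom G T w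

theorem HasRemoteWalk.of_common_neighbor (hzu : G.Adj z u) (hzv : G.Adj z v)
    (hz : IsRemoteFrom G T z) : HasRemoteWalk G T u v := by
  refine ⟨.cons hzu.symm (.cons hzv .nil), by simp, fun huv => ?_,
    fun _ => ⟨z, by simp, hzu.ne⟩, fun x hx hxu hxv => ?_⟩
  · simp [Walk.cons_isPath_iff, huv, hzu.ne', hzv.ne]
  · obtain rfl : x = z := by simpa [hxu, hxv] using hx
    exact hz

theorem HasRemoteWalk.of_adj_of_adj_of_adj (hne : u ≠ v) (huv : ¬ G.Adj u v)
    (huz : G.Adj u z) (hzw : G.Adj z w) (hwv : G.Adj w v)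
    (hz : IsRemoteFrom G T z) (hw : IsRemoteFrom G T w) : HasRemoteWalk G T u v := by
  have huw : u ≠ w := fun h => huv (h ▸ hwv)
  have hzv : z ≠ v := fun h => huv (h ▸ huz)
  refine ⟨.cons huz (.cons hzw (.cons hwv .nil)), by simp, fun _ => ?_,
    fun h => absurd h hne, fun x hx hxu hxv => ?_⟩
  · simp [Walk.cons_isPath_iff, hne, huw, hzv, huz.ne, hzw.ne, hwv.ne]
  · obtain rfl | rfl : x = z ∨ x = w := by simpa [hxu, hxv] using hx
    exacts [hz, hw]

end Walks

section CommonNeighbors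

variable {V : Type*} {G : SimpleGraph V} {X Y : Set V} {T : Finset V} {u v : V}

/-- Any two vertices of `X` outside a finite set `T` have a common neighbor in `Y` that is remote
from `T`. The two vertices may coincide, so single vertices of `X` are covered as well. -/
def HasRemoteCommonNeighbors (G : SimpleGraph V) (X Y : Set V) : Prop :=
  ∀ T : Finset V, ∀ u ∈ X, u ∉ T → ∀ v ∈ X, v ∉ T →
    ∃ z ∈ Y, G.Adj z u ∧ G.Adj z v ∧ IsRemoteFrom G T z

theorem HasRemoteCommonNeighbors.hasRemoteWalk (hXY : HasRemoteCommonNeighbors G X Y)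
    (hu : u ∈ X) (huT : u ∉ T) (hv : v ∈ X) (hvT : v ∉ T) : HasRemoteWalk G T u v := by
  obtain ⟨z, -, hzu, hzv, hz⟩ := hXY T u hu huT v hv hvT
  exact .of_common_neighbor hzu hzv hz

theorem HasRemoteCommonNeighbors.hasRemoteWalk_of_not_adj
    (hXY : HasRemoteCommonNeighbors G X Y) (hYX : HasRemoteCommonNeighbors G Y X)
    (huv : ¬ G.Adj u v) (hu : u ∈ X) (huT : u ∉ T) (hv : v ∈ Y) (hvT : v ∉ T) :
    HasRemoteWalk G T u v := by
  obtain ⟨z, hzY, hzu, -, hz⟩ := hXY T u hu huT u hu huT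
  obtain rfl | hne := eq_or_ne u v
  · exact .of_common_neighbor hzu hzu hz
  · obtain ⟨w, -, hwz, hwv, hw⟩ := hYX T z hzY hz.1 v hv hvT
    exact .of_adj_of_adj_of_adj hne huv hzu.symm hwz.symm hwv hz hw

end CommonNeighbors

section Extension

variable {V : Type*} {G : SimpleGraph V} {X Y : Set V}

/-- The extension property of the infinite random bipartite graph, from the part `X` to the part
`Y`: disjoint finite `A, B ⊆ X` are separated by infinitely many vertices of `Y`. -/
def ExtensionProperty (G : SimpleGraph V) (X Y : Set V) : Prop :=
  ∀ A B : Finset V, ↑A ⊆ X → ↑B ⊆ X → Disjoint A B →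
    {z ∈ Y | (∀ a ∈ A, G.Adj z a) ∧ ∀ b ∈ B, ¬ G.Adj z b}.Infinite

theorem ExtensionProperty.exists_forall_adj_isRemoteFrom (h : ExtensionProperty G X Y)
    (hcover : X ∪ Y = Set.univ) (hY : G.IsIndepSet Y) {A T : Finset V} (hA : ↑A ⊆ X)
    (hAT : Disjoint A T) : ∃ z ∈ Y, (∀ a ∈ A, G.Adj z a) ∧ IsRemoteFrom G T z := by
  classical
  have hTX : (↑({t ∈ T | t ∈ X} : Finset V) : Set V) ⊆ X :=
    fun _ ht => (Finset.mem_filter.mp ht).2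
  have hATX : Disjoint A {t ∈ T | t ∈ X} := hAT.mono_right (Finset.filter_subset _ _)
  obtain ⟨z, ⟨hzY, hzA, hzB⟩, hzT⟩ := (h A _ hA hTX hATX).exists_notMem_finset T
  refine ⟨z, hzY, hzA, hzT, fun t ht hzt => ?_⟩
  obtain htX | htY := Set.eq_univ_iff_forall.mp hcover t
  · exact hzB t (Finset.mem_filter.mpr ⟨ht, htX⟩) hzt
  · exact hY hzY htY hzt.ne hzt

theorem ExtensionProperty.hasRemoteCommonNeighbors (h : ExtensionProperty G X Y)
    (hcover : X ∪ Y = Set.univ) (hY : G.IsIndepSet Y) : HasRemoteCommonNeighbors G X Y := by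
  classical
  intro T u hu huT v hv hvT
  obtain ⟨z, hzY, hadj, hz⟩ := h.exists_forall_adj_isRemoteFrom hcover hY (A := {u, v}) (T := T)
    (by simp [Set.pair_subset_iff, hu, hv]) (by simp [huT, hvT])
  exact ⟨z, hzY, hadj u (by simp), hadj v (by simp), hz⟩

theorem isIndepSet_right_of_isBipartiteWith (hG : G.IsBipartiteWith X Y) : G.IsIndepSet Y :=
  fun _ hx _ hy _ hxy => Set.disjoint_left.mp hG.disjoint (hG.mem_of_mem_adj' hy hxy) hx

end Extension

theorem random_bipartite_cec_general {V : Type*} {G : SimpleGraph V} {X Y : Set V}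
    (hcover : X ∪ Y = Set.univ)
    (hXY : HasRemoteCommonNeighbors G X Y) (hYX : HasRemoteCommonNeighbors G Y X) : CEC G := by
  intro u v huv T huT hvT
  obtain hu | hu := Set.eq_univ_iff_forall.mp hcover u <;>
    obtain hv | hv := Set.eq_univ_iff_forall.mp hcover v
  · exact hXY.hasRemoteWalk hu huT hv hvT
  · exact hXY.hasRemoteWalk_of_not_adj hYX huv hu huT hv hvT
  · exact hYX.hasRemoteWalk_of_not_adj hXY huv hu huT hv hvT
  · exact hYX.hasRemoteWalk hu huT hv hvT

/-- The infinite random bipartite graph is c.e.c.: if `G` is bipartite with parts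
`V₁, V₂` and for all disjoint finite sets `A, B` contained in one part there are
infinitely many vertices of the other part adjacent to all of `A` and none of `B`,
then `G` is c.e.c. -/
theorem random_bipartite_cec {V : Type*} (G : SimpleGraph V) (V₁ V₂ : Set V)
    (hcover : V₁ ∪ V₂ = Set.univ) (hdisj : Disjoint V₁ V₂)
    (hbip : ∀ x y, G.Adj x y → (x ∈ V₁ ∧ y ∈ V₂) ∨ (x ∈ V₂ ∧ y ∈ V₁))
    (h₁ : ∀ A B : Finset V, ↑A ⊆ V₁ → ↑B ⊆ V₁ → Disjoint A B →
      {z ∈ V₂ | (∀ a ∈ A, G.Adj z a) ∧ ∀ b ∈ B, ¬ G.Adj z b}.Infinite)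
    (h₂ : ∀ A B : Finset V, ↑A ⊆ V₂ → ↑B ⊆ V₂ → Disjoint A B →
      {z ∈ V₁ | (∀ a ∈ A, G.Adj z a) ∧ ∀ b ∈ B, ¬ G.Adj z b}.Infinite) :
    CEC G := by
  have hG : G.IsBipartiteWith V₁ V₂ := ⟨hdisj, hbip⟩
  exact random_bipartite_cec_general hcover
    (ExtensionProperty.hasRemoteCommonNeighbors h₁ hcover
      (isIndepSet_right_of_isBipartiteWith hG))
    (ExtensionProperty.hasRemoteCommonNeighbors h₂ (Set.union_comm V₁ V₂ ▸ hcover)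
      (isIndepSet_right_of_isBipartiteWith hG.symm))
end

section
/- Let G be a countably infinite graph satisfying the c.e.c. property whose chromatic number χ(G) is finite. Then the distinguishing chromatic number of G satisfies χ_D(G) ≤ χ(G) + 2. -/
open SimpleGraph

/-- The distinguishing chromatic number of `G`: the least `n` such that `G` has a proper
`n`-colouring for which the identity is the only automorphism of `G` preserving all
colours. -/
noncomputable def distChromaticNumber {V : Type*} (G : SimpleGraph V) : ℕ∞ :=
  ⨅ n ∈ {n : ℕ | ∃ c : G.Coloring (Fin n),
      ∀ α : G ≃g G, (∀ v, c (α v) = c v) → ∀ v, α v = v}, (n : ℕ∞)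

/-! Two extra colours, alternating along an induced one-way infinite path `R`, make a proper
colouring distinguishing as soon as `R` separates all other vertices by adjacency: an automorphism
preserving the colours maps `R` to itself, hence fixes it pointwise because the ray is rigid, and
then fixes every other vertex because that vertex is determined by its neighbours on `R`.

The path `R` is a generic limit of finite induced paths `p` (Rasiowa–Sikorski, with countably many
requirements). To separate `u` from `v`, the c.e.c. property first extends `p` by a vertex `y`
adjacent to nothing on `p` but its end, and to neither `u` nor `v`; it then provides a path from `y`
to `u` whose interior avoids `p`, `v` and their neighbours. Stopping just before `u` and
shortcutting to a chordless path gives an extension of `p` that ends in a neighbour of `u` not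
adjacent to `v`.
-/

section Distinguishing

variable {V W α β : Type*} {G : SimpleGraph V} {H : SimpleGraph W}

/-- A colouring is distinguishing if the identity is the only automorphism of the graph that
preserves all colours. -/
def IsDistinguishing (c : G.Coloring α) : Prop :=
  ∀ σ : G ≃g G, (∀ v, c (σ v) = c v) → ∀ v, σ v = v

lemma IsDistinguishing.distChromaticNumber_le_card [Fintype α] {c : G.Coloring α}
    (hc : IsDistinguishing c) : distChromaticNumber G ≤ Fintype.card α := by
  let e := Fintype.equivFin α
  exact iInf₂_le (Fintype.card α)
    ⟨recolorOfEquiv G e c, fun σ hσ => hc σ fun v => e.injective (hσ v)⟩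

/-- A set `S` separates `u` from `v` if one of the two lies in `S`, or some vertex of `S` is
adjacent to exactly one of them. -/
def Separates (G : SimpleGraph V) (S : Set V) (u v : V) : Prop :=
  u ∈ S ∨ v ∈ S ∨ ∃ x ∈ S, ¬ (G.Adj x u ↔ G.Adj x v)

lemma Separates.mono {S T : Set V} {u v : V} (h : Separates G S u v) (hST : S ⊆ T) :
    Separates G T u v :=
  h.imp (@hST u) (Or.imp (@hST v) fun ⟨x, hx, hne⟩ => ⟨x, hST hx, hne⟩)

lemma apply_eq_self_of_pairwise_separates {S : Set V} (hS : Pairwise (Separates G S))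
    (σ : G ≃g G) (hσ : ∀ x ∈ S, σ x = x) (v : V) : σ v = v := by
  by_contra hv
  rcases hS hv with h | h | ⟨x, hx, hne⟩
  · exact hv (σ.injective (hσ _ h))
  · exact hv (hσ v h)
  · refine hne ?_
    rw [← σ.map_adj_iff (v := x) (w := v), hσ x hx]

lemma apply_eq_self_of_subsingleton_iso [Subsingleton (H ≃g H)] (φ : H ↪g G) (σ : G ≃g G)
    (hσ : ∀ v, v ∈ Set.range φ ↔ σ v ∈ Set.range φ) (x : W) : σ (φ x) = φ x := by
  let restricted : G.induce (Set.range φ) ≃g G.induce (Set.range φ) :=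
    { σ.toEquiv.subtypeEquiv hσ with map_rel_iff' := σ.map_adj_iff }
  let τ : H ≃g H := (φ.isoInduceRange.trans restricted).trans φ.isoInduceRange.symm
  have hτ : τ x = x := DFunLike.congr_fun (Subsingleton.elim τ (Iso.refl)) x
  exact congrArg Subtype.val ((φ.isoInduceRange.symm_apply_eq).1 hτ)

/-- The colouring of `G` that uses a second palette, and a colouring `d` of `H`, on an induced
copy of `H`, and agrees with `c` elsewhere. -/
noncomputable def overlayColoring (c : G.Coloring α) (φ : H ↪g G) (d : H.Coloring β) :
    G.Coloring (α ⊕ β) :=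
  Coloring.mk (Function.extend φ (Sum.inr ∘ d) (Sum.inl ∘ c)) fun {u v} huv => by
    by_cases hu : ∃ x, φ x = u <;> by_cases hv : ∃ y, φ y = v
    · obtain ⟨x, rfl⟩ := hu
      obtain ⟨y, rfl⟩ := hv
      simpa [φ.injective.extend_apply] using d.valid (φ.map_adj_iff.1 huv)
    · obtain ⟨x, rfl⟩ := hu
      simp [φ.injective.extend_apply, Function.extend_apply' _ _ _ hv]
    · obtain ⟨y, rfl⟩ := hv
      simp [φ.injective.extend_apply, Function.extend_apply' _ _ _ hu]
    · simpa [Function.extend_apply' _ _ _ hu, Function.extend_apply' _ _ _ hv] using c.valid huv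

lemma isRight_overlayColoring_iff (c : G.Coloring α) (φ : H ↪g G) (d : H.Coloring β) (v : V) :
    (overlayColoring c φ d v).isRight ↔ v ∈ Set.range φ := by
  change (Function.extend φ (Sum.inr ∘ d) (Sum.inl ∘ c) v).isRight ↔ _
  by_cases hv : ∃ x, φ x = v
  · obtain ⟨x, rfl⟩ := hv
    simp [φ.injective.extend_apply]
  · simp [Set.mem_range, hv]

theorem isDistinguishing_overlayColoring [Subsingleton (H ≃g H)] (c : G.Coloring α)
    (φ : H ↪g G) (d : H.Coloring β) (hφ : Pairwise (Separates G (Set.range φ))) :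
    IsDistinguishing (overlayColoring c φ d) := by
  intro σ hσ
  have hrange (v : V) : v ∈ Set.range φ ↔ σ v ∈ Set.range φ := by
    rw [← isRight_overlayColoring_iff c φ d, ← isRight_overlayColoring_iff c φ d, hσ]
  exact apply_eq_self_of_pairwise_separates hφ σ <|
    Set.forall_mem_range.2 (apply_eq_self_of_subsingleton_iso φ σ hrange)

end Distinguishing

section Ray

/-- The proper 2-colouring of the one-way infinite path by parity. -/
def hasseNatBicoloring : (hasse ℕ).Coloring Bool :=
  Coloring.mk Nat.bodd fun {i j} h => by
    have h' : i + 1 = j ∨ j + 1 = i := by simpa using h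
    rcases h' with rfl | rfl <;> simp

lemma hasse_nat_iso_apply_zero (σ : hasse ℕ ≃g hasse ℕ) : σ 0 = 0 := by
  have eq_one_of_adj {a : ℕ} (h : (hasse ℕ).Adj (σ 0) (σ a)) : a = 1 := by
    simpa [eq_comm] using σ.map_adj_iff.1 h
  by_contra h0
  -- Otherwise both neighbours of `σ 0` would be images of the only neighbour of `0`.
  obtain ⟨a, ha⟩ := σ.surjective (σ 0 - 1)
  obtain ⟨b, hb⟩ := σ.surjective (σ 0 + 1)
  obtain rfl := eq_one_of_adj (a := a) (by simp [ha]; omega)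
  obtain rfl := eq_one_of_adj (a := b) (by simp [hb])
  omega

lemma hasse_nat_iso_apply (σ : hasse ℕ ≃g hasse ℕ) (n : ℕ) : σ n = n := by
  induction n using Nat.twoStepInduction with
  | zero => exact hasse_nat_iso_apply_zero σ
  | one =>
    have hadj : (hasse ℕ).Adj (σ 0) (σ 1) := σ.map_adj_iff.2 (by simp)
    simpa [hasse_nat_iso_apply_zero σ, eq_comm] using hadj
  | more n ih ih' =>
    have hadj : (hasse ℕ).Adj (σ (n + 1)) (σ (n + 2)) := σ.map_adj_iff.2 (by simp)
    have hne : σ n ≠ σ (n + 2) := fun h => by simpa using σ.injective h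
    have hnext : n + 1 + 1 = σ (n + 2) ∨ σ (n + 2) + 1 = n + 1 := by simpa [ih'] using hadj
    omega

instance : Subsingleton (hasse ℕ ≃g hasse ℕ) :=
  ⟨fun σ τ => DFunLike.ext σ τ fun n => by rw [hasse_nat_iso_apply, hasse_nat_iso_apply]⟩

end Ray

section Chordless

variable {V W : Type*} {G : SimpleGraph V} {H : SimpleGraph W} {u v w x : V}

lemma eq_of_adj_of_length_cons_eq_dist {h : G.Adj u v} {p : G.Walk v w}
    (hp : (p.cons h).length = G.dist u w) (hx : x ∈ p.support) (hux : G.Adj u x) : v = x := by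
  classical
  have hdrop : G.dist u w ≤ ((p.dropUntil x hx).cons hux).length := dist_le _
  have hsplit : (p.takeUntil x hx).length + (p.dropUntil x hx).length = p.length := by
    rw [← Walk.length_append, Walk.take_spec]
  rw [← hp, Walk.length_cons, Walk.length_cons] at hdrop
  exact Walk.eq_of_length_eq_zero (p := p.takeUntil x hx) (by omega)

lemma isChordless_of_length_eq_dist {p : G.Walk u v} (hp : p.length = G.dist u v) :
    p.IsChordless := by
  induction p with
  | nil => simp [Walk.isChordless_iff_forall_mem_edges]
  | @cons u v w h p ih =>
    have hchordless := ih (length_eq_dist_of_subwalk hp (p.isSubwalk_cons h))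
    have hstart {b : V} (hb : b ∈ p.support) (hub : G.Adj u b) : s(u, b) = s(u, v) := by
      rw [eq_of_adj_of_length_cons_eq_dist hp hb hub]
    rw [Walk.isChordless_iff_forall_mem_edges]
    simp only [Walk.support_cons, Walk.edges_cons, List.mem_cons]
    rintro a b (rfl | ha) (rfl | hb) hab
    · exact absurd hab G.irrefl
    · exact .inl (hstart hb hab)
    · exact .inl (Sym2.eq_swap.trans (hstart ha hab.symm))
    · exact .inr (hchordless.mem_edges ha hb hab)

lemma isChordless_map {p : G.Walk u v} (hp : p.IsChordless) (φ : G ↪g H) :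
    (p.map φ.toHom).IsChordless := by
  rw [Walk.isChordless_iff_forall_mem_edges]
  simp only [Walk.support_map, List.mem_map, Walk.edges_map]
  rintro _ _ ⟨a, ha, rfl⟩ ⟨b, hb, rfl⟩ hadj
  exact ⟨s(a, b), hp.mem_edges ha hb (φ.map_adj_iff.1 hadj), rfl⟩

lemma exists_isPath_isChordless_support_subset (p : G.Walk u v) :
    ∃ q : G.Walk u v, q.IsPath ∧ q.IsChordless ∧ q.support ⊆ p.support := by
  let S : Set V := {x | x ∈ p.support}
  obtain ⟨q, hq⟩ := (p.induce S fun _ => id).reachable.exists_walk_length_eq_dist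
  let ι : G.induce S ↪g G := Embedding.induce S
  refine ⟨q.map ι.toHom, (q.isPath_of_length_eq_dist hq).map ι.injective,
    isChordless_map (isChordless_of_length_eq_dist hq) ι, fun x hx => ?_⟩
  obtain ⟨y, -, rfl⟩ := List.mem_map.1 (Walk.support_map ι.toHom q ▸ hx)
  exact y.2

lemma isPath_append_cons {p : G.Walk u v} {q : G.Walk w x} (hp : p.IsPath) (hq : q.IsPath)
    (h : G.Adj v w) (hpq : p.support.Disjoint q.support) : (p.append (q.cons h)).IsPath := by
  rw [Walk.isPath_def, Walk.support_append, Walk.support_cons, List.tail_cons]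
  exact hp.support_nodup.append hq.support_nodup hpq

lemma isChordless_append_cons {p : G.Walk u v} {q : G.Walk w x} (hp : p.IsChordless)
    (hq : q.IsChordless) (h : G.Adj v w)
    (hpq : ∀ a ∈ p.support, ∀ b ∈ q.support, G.Adj a b → a = v ∧ b = w) :
    (p.append (q.cons h)).IsChordless := by
  have hcross {a b : V} (ha : a ∈ p.support) (hb : b ∈ q.support) (hab : G.Adj a b) :
      s(a, b) = s(v, w) := by
    obtain ⟨rfl, rfl⟩ := hpq a ha b hb hab
    rfl
  have hmem {a : V} : a ∈ (p.append (q.cons h)).support ↔ a ∈ p.support ∨ a ∈ q.support := by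
    simp [Walk.support_append]
  rw [Walk.isChordless_iff_forall_mem_edges]
  simp only [hmem, Walk.edges_append, Walk.edges_cons, List.mem_append, List.mem_cons]
  rintro a b (ha | ha) (hb | hb) hab
  · exact .inl (hp.mem_edges ha hb hab)
  · exact .inr (.inl (hcross ha hb hab))
  · exact .inr (.inl (Sym2.eq_swap.trans (hcross hb ha hab.symm)))
  · exact .inr (.inr (hq.mem_edges ha hb hab))

end Chordless

/-- An induced path of `G` starting at `x`, encoded as a chordless path. -/
structure InducedPath {V : Type*} (G : SimpleGraph V) (x : V) where
  /-- The final vertex. -/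
  last : V
  /-- The underlying walk. -/
  walk : G.Walk x last
  isPath : walk.IsPath
  isChordless : walk.IsChordless

namespace InducedPath

variable {V : Type*} {G : SimpleGraph V} {x y : V}

/-- Induced paths are ordered by extension: `p ≤ q` if `q` starts with `p`. -/
instance : Preorder (InducedPath G x) where
  le p q := p.walk.support <+: q.walk.support
  le_refl p := List.prefix_rfl
  le_trans _ _ _ := List.IsPrefix.trans

/-- The trivial path. -/
def nil (x : V) : InducedPath G x where
  last := x
  walk := .nil
  isPath := .nil
  isChordless := isChordless_of_length_eq_dist (by simp)

/-- The concatenation of two induced paths along an edge, which must be the only edge between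
them. -/
def append (p : InducedPath G x) (q : InducedPath G y) (h : G.Adj p.last y)
    (hdisj : p.walk.support.Disjoint q.walk.support)
    (hadj : ∀ a ∈ p.walk.support, ∀ b ∈ q.walk.support, G.Adj a b → a = p.last ∧ b = y) :
    InducedPath G x where
  last := q.last
  walk := p.walk.append (q.walk.cons h)
  isPath := isPath_append_cons p.isPath q.isPath h hdisj
  isChordless := isChordless_append_cons p.isChordless q.isChordless h hadj

lemma le_append (p : InducedPath G x) {q : InducedPath G y} {h : G.Adj p.last y}
    {hdisj : p.walk.support.Disjoint q.walk.support}
    {hadj : ∀ a ∈ p.walk.support, ∀ b ∈ q.walk.support, G.Adj a b → a = p.last ∧ b = y} :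
    p ≤ p.append q h hdisj hadj :=
  Walk.support_prefix_support_append _ _

lemma getVert_eq_of_le {p q : InducedPath G x} (hpq : p ≤ q) {i : ℕ} (hi : i ≤ p.walk.length) :
    q.walk.getVert i = p.walk.getVert i := by
  have hsupport : p.walk.support <+: q.walk.support := hpq
  have hlen := hsupport.length_le
  simp only [Walk.length_support] at hlen
  rw [Walk.getVert_eq_support_getElem _ hi, Walk.getVert_eq_support_getElem _ (by omega),
    hsupport.getElem]

lemma adj_getVert_iff (p : InducedPath G x) {i j : ℕ} (hi : i ≤ p.walk.length)
    (hj : j ≤ p.walk.length) :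
    G.Adj (p.walk.getVert i) (p.walk.getVert j) ↔ (hasse ℕ).Adj i j := by
  have hasse_adj_iff : (hasse ℕ).Adj i j ↔ i + 1 = j ∨ j + 1 = i := by simp
  rw [hasse_adj_iff]
  constructor
  · intro hadj
    have hedge := p.isChordless.mem_edges (p.walk.getVert_mem_support i)
      (p.walk.getVert_mem_support j) hadj
    rw [← Walk.adj_toSubgraph_iff_mem_edges, Walk.toSubgraph_adj_iff] at hedge
    obtain ⟨k, hk, hklt⟩ := hedge
    have index_eq {m n : ℕ} (hm : m ≤ p.walk.length) (hn : n ≤ p.walk.length)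
        (h : p.walk.getVert m = p.walk.getVert n) : m = n := p.isPath.getVert_injOn hm hn h
    rcases Sym2.eq_iff.1 hk with ⟨h, h'⟩ | ⟨h, h'⟩
    · obtain rfl : k = i := index_eq hklt.le hi h
      exact .inl (index_eq hklt hj h')
    · obtain rfl : k = j := index_eq hklt.le hj h
      exact .inr (index_eq hklt hi h')
  · rintro (rfl | rfl)
    · exact p.walk.adj_getVert_succ hj
    · exact (p.walk.adj_getVert_succ hi).symm

lemma exists_hasse_nat_embedding_of_directedOn {S : Set (InducedPath G x)}
    (hS : DirectedOn (· ≤ ·) S) (hlen : ∀ n, ∃ p ∈ S, n ≤ p.walk.length) :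
    ∃ φ : hasse ℕ ↪g G, ∀ p ∈ S, ∀ v ∈ p.walk.support, v ∈ Set.range φ := by
  choose s hsS hs using hlen
  have hval {n : ℕ} {q : InducedPath G x} (hqS : q ∈ S) (hn : n ≤ q.walk.length) :
      (s n).walk.getVert n = q.walk.getVert n := by
    obtain ⟨r, -, hsr, hqr⟩ := hS _ (hsS n) q hqS
    rw [← getVert_eq_of_le hsr (hs n), getVert_eq_of_le hqr hn]
  have hcommon (i j : ℕ) : ∃ q ∈ S, i ≤ q.walk.length ∧ j ≤ q.walk.length :=
    ⟨s (max i j), hsS _, (le_max_left i j).trans (hs _), (le_max_right i j).trans (hs _)⟩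
  have hinj : Function.Injective fun n => (s n).walk.getVert n := fun i j hij => by
    obtain ⟨q, hqS, hi, hj⟩ := hcommon i j
    exact q.isPath.getVert_injOn hi hj (by simpa only [hval hqS hi, hval hqS hj] using hij)
  have hadj (i j : ℕ) :
      G.Adj ((s i).walk.getVert i) ((s j).walk.getVert j) ↔ (hasse ℕ).Adj i j := by
    obtain ⟨q, hqS, hi, hj⟩ := hcommon i j
    rw [hval hqS hi, hval hqS hj, q.adj_getVert_iff hi hj]
  refine ⟨⟨⟨_, hinj⟩, hadj _ _⟩, fun p hp v hv => ?_⟩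
  obtain ⟨n, rfl, hn⟩ := Walk.mem_support_iff_exists_getVert.1 hv
  exact ⟨n, hval hp hn⟩

end InducedPath

namespace CEC

variable {V : Type*} {G : SimpleGraph V} {u v x : V}

lemma exists_adj_forall_not_adj (hG : CEC G) {T : Finset V} (hx : x ∉ T) :
    ∃ y, G.Adj x y ∧ y ∉ T ∧ ∀ t ∈ T, ¬ G.Adj y t := by
  obtain ⟨p, hlen, -, -, hp⟩ := hG x x G.irrefl T hx hx
  cases p with
  | nil => simp at hlen
  | @cons _ y _ h q => exact ⟨y, h, hp y (by simp) h.ne' h.ne'⟩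

lemma exists_inducedPath_to_neighbor (hG : CEC G) (huv : u ≠ v) (hadj : ¬ G.Adj u v)
    {T : Finset V} (hu : u ∉ T) (hv : v ∉ T) :
    ∃ q : InducedPath G u, G.Adj q.last v ∧
      ∀ w ∈ q.walk.support, w ≠ u → w ∉ T ∧ ∀ t ∈ T, ¬ G.Adj w t := by
  obtain ⟨p, -, hpath, -, hp⟩ := hG u v hadj T hu hv
  have hnil : ¬ p.Nil := Walk.not_nil_of_ne huv
  obtain ⟨q, hqpath, hq, hqp⟩ := exists_isPath_isChordless_support_subset p.dropLast
  refine ⟨⟨_, q, hqpath, hq⟩, p.adj_penultimate hnil, fun w hw hwu => ?_⟩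
  have hwp : w ∈ p.support.dropLast := p.support_dropLast hnil ▸ hqp hw
  have hwv : w ≠ v := by
    have hnodup := (hpath huv).support_nodup
    rw [← p.dropLast_support_concat] at hnodup
    rintro rfl
    exact List.disjoint_of_nodup_append hnodup hwp (List.mem_singleton_self w)
  exact hp w (List.mem_of_mem_dropLast hwp) hwu hwv

lemma exists_adj_last (hG : CEC G) (p : InducedPath G x) (T : Finset V) :
    ∃ y, G.Adj p.last y ∧ y ∉ p.walk.support ∧
      (∀ a ∈ p.walk.support, G.Adj a y → a = p.last) ∧
      ∀ t ∈ T, t ∉ p.walk.support → t ≠ y ∧ ¬ G.Adj y t := by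
  classical
  obtain ⟨y, hy, hyU, hfar⟩ := hG.exists_adj_forall_not_adj (x := p.last)
    (T := (p.walk.support.toFinset ∪ T).erase p.last) (Finset.notMem_erase _ _)
  have hmem {t : V} (ht : t ≠ p.last) (h : t ∈ p.walk.support ∨ t ∈ T) :
      t ∈ (p.walk.support.toFinset ∪ T).erase p.last := by
    simpa using ⟨ht, h⟩
  refine ⟨y, hy, fun hyp => hyU (hmem hy.ne' (.inl hyp)), fun a ha hay => ?_,
    fun t htT htp => ?_⟩
  · by_contra hne
    exact hfar a (hmem hne (.inl ha)) hay.symm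
  · have ht := hmem (by rintro rfl; exact htp p.walk.end_mem_support) (.inr htT)
    exact ⟨by rintro rfl; exact hyU ht, hfar t ht⟩

lemma exists_le_length (hG : CEC G) (p : InducedPath G x) (n : ℕ) :
    ∃ q, p ≤ q ∧ n ≤ q.walk.length := by
  induction n with
  | zero => exact ⟨p, le_rfl, Nat.zero_le _⟩
  | succ n ih =>
    obtain ⟨q, hpq, hn⟩ := ih
    obtain ⟨y, hy, hyq, hlast, -⟩ := hG.exists_adj_last q ∅
    refine ⟨q.append (.nil y) hy ?_ ?_, hpq.trans q.le_append, ?_⟩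
    · simpa [InducedPath.nil] using hyq
    · simpa [InducedPath.nil] using hlast
    · simpa [InducedPath.append, InducedPath.nil] using hn

lemma exists_le_separates (hG : CEC G) (p : InducedPath G x) (huv : u ≠ v) :
    ∃ q, p ≤ q ∧ Separates G {w | w ∈ q.walk.support} u v := by
  classical
  by_cases hup : u ∈ p.walk.support
  · exact ⟨p, le_rfl, .inl hup⟩
  by_cases hvp : v ∈ p.walk.support
  · exact ⟨p, le_rfl, .inr (.inl hvp)⟩
  obtain ⟨y, hy, hyp, hlast, hfar⟩ := hG.exists_adj_last p {u, v}
  obtain ⟨huy, hyu⟩ := hfar u (by simp) hup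
  obtain ⟨hvy, hyv⟩ := hfar v (by simp) hvp
  obtain ⟨q, hqu, hq⟩ := hG.exists_inducedPath_to_neighbor huy.symm hyu
    (T := insert v p.walk.support.toFinset) (by simpa using ⟨hvy.symm, hyp⟩)
    (by simpa using ⟨huv, hup⟩)
  have hqp {a b : V} (ha : a ∈ p.walk.support) (hb : b ∈ q.walk.support) (hby : b ≠ y) :
      a ≠ b ∧ ¬ G.Adj a b := by
    have haT : a ∈ insert v p.walk.support.toFinset := by simp [ha]
    exact ⟨by rintro rfl; exact (hq a hb hby).1 haT, fun h => (hq b hb hby).2 a haT h.symm⟩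
  have hqv : ¬ G.Adj q.last v := by
    rcases eq_or_ne q.last y with h | h
    · rwa [h]
    · exact (hq _ q.walk.end_mem_support h).2 v (by simp)
  refine ⟨p.append q hy (fun a ha hb => ?_) (fun a ha b hb hab => ?_), p.le_append,
    .inr (.inr ⟨q.last, Walk.end_mem_support _, fun h => hqv (h.1 hqu)⟩)⟩
  · rcases eq_or_ne a y with rfl | hay
    · exact hyp ha
    · exact (hqp ha hb hay).1 rfl
  · rcases eq_or_ne b y with rfl | hby
    · exact ⟨hlast a ha hab, rfl⟩
    · exact absurd hab (hqp ha hb hby).2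

theorem exists_hasse_nat_embedding_pairwise_separates [Countable V] [Nonempty V] (hG : CEC G) :
    ∃ φ : hasse ℕ ↪g G, Pairwise (Separates G (Set.range φ)) := by
  let P := InducedPath G (Classical.arbitrary V)
  let long (n : ℕ) : Order.Cofinal P :=
    ⟨{p | n ≤ p.walk.length}, fun p =>
      let ⟨q, hpq, hq⟩ := hG.exists_le_length p n
      ⟨q, hq, hpq⟩⟩
  let separating (e : {e : V × V // e.1 ≠ e.2}) : Order.Cofinal P :=
    ⟨{p | Separates G {w | w ∈ p.walk.support} e.1.1 e.1.2}, fun p =>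
      let ⟨q, hpq, hq⟩ := hG.exists_le_separates p e.2
      ⟨q, hq, hpq⟩⟩
  have : Encodable (ℕ ⊕ {e : V × V // e.1 ≠ e.2}) := .ofCountable _
  let I := Order.idealOfCofinals (.nil _) (Sum.elim long separating)
  have hmeets (i : ℕ ⊕ {e : V × V // e.1 ≠ e.2}) : ∃ p ∈ Sum.elim long separating i, p ∈ I :=
    Order.cofinal_meets_idealOfCofinals _ _ i
  obtain ⟨φ, hφ⟩ := InducedPath.exists_hasse_nat_embedding_of_directedOn I.directed fun n =>
    let ⟨p, hn, hp⟩ := hmeets (.inl n)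
    ⟨p, hp, hn⟩
  refine ⟨φ, fun u v huv => ?_⟩
  obtain ⟨p, hsep, hp⟩ := hmeets (.inr ⟨(u, v), huv⟩)
  exact Separates.mono hsep (hφ p hp)

theorem exists_isDistinguishing [Countable V] [Nonempty V] (hG : CEC G) {α : Type*}
    (c : G.Coloring α) : ∃ d : G.Coloring (α ⊕ Bool), IsDistinguishing d := by
  obtain ⟨φ, hφ⟩ := hG.exists_hasse_nat_embedding_pairwise_separates
  exact ⟨overlayColoring c φ hasseNatBicoloring, isDistinguishing_overlayColoring c φ _ hφ⟩

end CEC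

/-- If `G` is a countably infinite c.e.c. graph with finite chromatic number, then
`χ_D(G) ≤ χ(G) + 2`. -/
theorem cec_distChromaticNumber_le {V : Type*} [Countable V] [Infinite V]
    (G : SimpleGraph V) (hG : CEC G) (hchrom : G.chromaticNumber ≠ ⊤) :
    distChromaticNumber G ≤ G.chromaticNumber + 2 := by
  obtain ⟨n, hn⟩ := ENat.ne_top_iff_exists.1 hchrom
  obtain ⟨c⟩ : G.Colorable n := chromaticNumber_le_iff_colorable.1 hn.ge
  obtain ⟨d, hd⟩ := hG.exists_isDistinguishing c
  simpa [← hn] using hd.distChromaticNumber_le_card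
end
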